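/- Let α ∈ ℂ with α ≠ 0 and let R ∈ ℂ(z)^{m×m}. Then R is para-skew-Hermitian if and only if there exist a natural number p and constant matrices A ∈ ℂ^{p×p}, B, C ∈ ℂ^{p×m}, D ∈ ℂ^{m×m} such that det(z·A − A^H) ≠ 0 in ℂ(z) and (α + conj(α)·z)·R = (z·D − D^H) + (z·B^H − C^H)·(z·A − A^H)⁻¹·(z·C − B). -/

import Mathlib

open Polynomial Matrix

set_option synthInstance.maxHeartbeats 1000000
set_option maxHeartbeats 1000000

noncomputable section

/-- Coefficientwise complex conjugation on rational functions. -/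
def conjRF : RatFunc ℂ →+* RatFunc ℂ :=
  RatFunc.mapRingHom (Polynomial.mapRingHom (starRingEnd ℂ))
    (by
      intro x hx
      simp only [Submonoid.mem_comap, mem_nonZeroDivisors_iff_ne_zero] at *
      intro h
      exact hx (Polynomial.map_injective _ (starRingEnd ℂ).injective (by simpa using h)))

/-- Substitution of `g` for the variable in `f`. -/
def subst (g f : RatFunc ℂ) : RatFunc ℂ := RatFunc.eval (algebraMap ℂ (RatFunc ℂ)) g f

/-- Constant complex matrices regarded as matrices over `ℂ(z)`. -/
def toRF {n o : Type*} (A : Matrix n o ℂ) : Matrix n o (RatFunc ℂ) :=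
  A.map (algebraMap ℂ (RatFunc ℂ))

/-- The para-conjugate `R^*(1/z)`. -/
def paraConj {n : Type*} (R : Matrix n n (RatFunc ℂ)) : Matrix n n (RatFunc ℂ) :=
  fun i j => subst (RatFunc.X)⁻¹ (conjRF (R j i))

def IsParaHermitian {n : Type*} (R : Matrix n n (RatFunc ℂ)) : Prop := paraConj R = R

def IsParaSkewHermitian {n : Type*} (R : Matrix n n (RatFunc ℂ)) : Prop := paraConj R = -R

/-- The variable `z` of `ℂ(z)`. -/
def zz : RatFunc ℂ := RatFunc.X

/-- Coefficientwise-conjugate transpose of a matrix over `ℂ(z)`. -/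
def conjT {a b : Type*} (R : Matrix a b (RatFunc ℂ)) : Matrix b a (RatFunc ℂ) :=
  fun i j => conjRF (R j i)

/-- Entrywise substitution of `g` into a matrix over `ℂ(z)`. -/
def substMat {a b : Type*} (g : RatFunc ℂ) (R : Matrix a b (RatFunc ℂ)) :
    Matrix a b (RatFunc ℂ) :=
  fun i j => subst g (R i j)

/-! ### The para-conjugation as a ring homomorphism -/

lemma eval_inv_ne {p : ℂ[X]} (hp : p ≠ 0) :
    Polynomial.eval₂ (algebraMap ℂ (RatFunc ℂ)) (RatFunc.X)⁻¹ p ≠ 0 := by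
  intro h
  have h1 : IsAlgebraic ℂ ((RatFunc.X : RatFunc ℂ)⁻¹) := ⟨p, hp, h⟩
  exact RatFunc.transcendental_X (IsAlgebraic.inv_iff.1 h1)

/-- `f ↦ (conj f)(1/z)` as a ring homomorphism. -/
def sg : RatFunc ℂ →+* RatFunc ℂ where
  toFun f := subst (RatFunc.X)⁻¹ (conjRF f)
  map_one' := by simp [subst]
  map_zero' := by simp [subst]
  map_add' x y := by
    simp only [subst, map_add]
    exact RatFunc.eval_add _ _ (eval_inv_ne (RatFunc.denom_ne_zero _))
      (eval_inv_ne (RatFunc.denom_ne_zero _))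
  map_mul' x y := by
    simp only [subst, map_mul]
    exact RatFunc.eval_mul _ _ (eval_inv_ne (RatFunc.denom_ne_zero _))
      (eval_inv_ne (RatFunc.denom_ne_zero _))

lemma sg_apply (f : RatFunc ℂ) : sg f = subst (RatFunc.X)⁻¹ (conjRF f) := rfl

lemma conjRF_poly (p : ℂ[X]) : conjRF (algebraMap ℂ[X] (RatFunc ℂ) p) =
    algebraMap ℂ[X] (RatFunc ℂ) (p.map (starRingEnd ℂ)) := by
  have := RatFunc.map_apply_div (Polynomial.mapRingHom (starRingEnd ℂ))
    (by
      intro x hx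
      simp only [Submonoid.mem_comap, mem_nonZeroDivisors_iff_ne_zero] at *
      intro h
      exact hx (Polynomial.map_injective _ (starRingEnd ℂ).injective (by simpa using h))) p 1
  simp only [map_one, div_one] at this
  exact this

lemma sg_C (c : ℂ) : sg (algebraMap ℂ (RatFunc ℂ) c) = algebraMap ℂ (RatFunc ℂ) (star c) := by
  have h := conjRF_poly (Polynomial.C c)
  rw [Polynomial.map_C, RatFunc.algebraMap_C, RatFunc.algebraMap_C] at h
  rw [sg_apply, RatFunc.algebraMap_eq_C, h, subst, RatFunc.eval_C]
  rfl

lemma sg_C2 (c : ℂ) : sg (RatFunc.C c) = RatFunc.C (star c) := by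
  simpa only [RatFunc.algebraMap_eq_C] using sg_C c

lemma sg_zz : sg zz = zz⁻¹ := by
  have h := conjRF_poly Polynomial.X
  rw [Polynomial.map_X, RatFunc.algebraMap_X] at h
  rw [sg_apply, zz, h, subst, RatFunc.eval_X]

lemma zz_ne : zz ≠ 0 := RatFunc.X_ne_zero

/-- Para-conjugate of a rectangular matrix. -/
def pc {a b : Type*} (M : Matrix a b (RatFunc ℂ)) : Matrix b a (RatFunc ℂ) := (M.map sg)ᵀ

lemma paraConj_eq {n : Type*} (R : Matrix n n (RatFunc ℂ)) : paraConj R = pc R := rfl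

lemma pc_mul {a b c : Type*} [Fintype b] (M : Matrix a b (RatFunc ℂ))
    (N : Matrix b c (RatFunc ℂ)) : pc (M * N) = pc N * pc M := by
  simp [pc, Matrix.map_mul, Matrix.transpose_mul]

lemma pc_toRF {a b : Type*} (M : Matrix a b ℂ) : pc (toRF M) = toRF Mᴴ := by
  ext i j
  simp [pc, toRF, sg_C2]

lemma pc_add {a b : Type*} (M N : Matrix a b (RatFunc ℂ)) : pc (M + N) = pc M + pc N := by
  ext i j; simp [pc]

lemma pc_smul {a b : Type*} (c : RatFunc ℂ) (M : Matrix a b (RatFunc ℂ)) :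
    pc (c • M) = sg c • pc M := by
  ext i j; simp [pc]

lemma pc_one {a : Type*} [DecidableEq a] : pc (1 : Matrix a a (RatFunc ℂ)) = 1 := by
  simp [pc]

/-- A matrix pencil. -/
def pen {a b : Type*} (E F : Matrix a b ℂ) : Matrix a b (RatFunc ℂ) := zz • toRF E - toRF F

lemma pc_pen {a b : Type*} (E F : Matrix a b ℂ) : pc (pen E F) = (-zz⁻¹) • pen Fᴴ Eᴴ := by
  ext i j
  have := zz_ne
  simp [pc, pen, toRF, sg_C2, sg_zz]
  field_simp
  ring

lemma det_pc {a : Type*} [Fintype a] [DecidableEq a] (M : Matrix a a (RatFunc ℂ)) :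
    (pc M).det = sg M.det := by
  rw [pc, Matrix.det_transpose, RingHom.map_det]; rfl

lemma pen_det_symm {a : Type*} [Fintype a] [DecidableEq a] {E F : Matrix a a ℂ}
    (h : (pen E F).det ≠ 0) : (pen Fᴴ Eᴴ).det ≠ 0 := by
  intro h0
  have h1 := det_pc (pen E F)
  rw [pc_pen, Matrix.det_smul, h0, mul_zero] at h1
  exact h ((map_eq_zero sg).1 h1.symm)

/-! ### Realizable matrices -/

/-- `T = Q (zE - F)⁻¹ V` with constant `Q`, `E`, `F`, `V`. -/
def Rl {a b : Type} (T : Matrix a b (RatFunc ℂ)) : Prop :=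
  ∃ (ι : Type) (_ : Fintype ι) (_ : DecidableEq ι) (E F : Matrix ι ι ℂ) (Q : Matrix a ι ℂ)
    (V : Matrix ι b ℂ) (x : Matrix ι b (RatFunc ℂ)),
    (pen E F).det ≠ 0 ∧ pen E F * x = toRF V ∧ toRF Q * x = T

lemma toRF_mul {a b c : Type*} [Fintype b] (M : Matrix a b ℂ) (N : Matrix b c ℂ) :
    toRF (M * N) = toRF M * toRF N := by
  simp [toRF, Matrix.map_mul]

lemma toRF_add {a b : Type*} (M N : Matrix a b ℂ) : toRF (M + N) = toRF M + toRF N := by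
  ext i j; simp [toRF]

lemma toRF_neg {a b : Type*} (M : Matrix a b ℂ) : toRF (-M) = -toRF M := by
  ext i j; simp [toRF]

lemma toRF_zero {a b : Type*} : toRF (0 : Matrix a b ℂ) = 0 := by
  ext i j; simp [toRF]

lemma toRF_one {a : Type*} [DecidableEq a] : toRF (1 : Matrix a a ℂ) = 1 := by
  simp [toRF]

lemma toRF_fromRows {a a' b : Type*} (M : Matrix a b ℂ) (N : Matrix a' b ℂ) :
    toRF (fromRows M N) = fromRows (toRF M) (toRF N) := by
  ext (i | i) j <;> simp [toRF]

lemma toRF_fromCols {a b b' : Type*} (M : Matrix a b ℂ) (N : Matrix a b' ℂ) :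
    toRF (fromCols M N) = fromCols (toRF M) (toRF N) := by
  ext i (j | j) <;> simp [toRF]

lemma pen_fromBlocks {a b c d : Type*} (A A' : Matrix a b ℂ) (B B' : Matrix a c ℂ)
    (C C' : Matrix d b ℂ) (D D' : Matrix d c ℂ) :
    pen (fromBlocks A B C D) (fromBlocks A' B' C' D') =
      fromBlocks (pen A A') (pen B B') (pen C C') (pen D D') := by
  ext (i | i) (j | j) <;> simp [pen, toRF]

lemma pen_zero_left {a b : Type*} (M : Matrix a b ℂ) : pen 0 M = -toRF M := by
  simp [pen, toRF_zero]

lemma pen_zero_right {a b : Type*} (M : Matrix a b ℂ) : pen M 0 = zz • toRF M := by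
  simp [pen, toRF_zero]

lemma pen_zero {a b : Type*} : pen (0 : Matrix a b ℂ) 0 = 0 := by
  simp [pen, toRF_zero]

lemma Rl_const {a b : Type} [Fintype a] [DecidableEq a] (M : Matrix a b ℂ) : Rl (toRF M) := by
  refine ⟨a, inferInstance, inferInstance, 0, -1, 1, M, toRF M, ?_, ?_, ?_⟩
  · simp [pen_zero_left, toRF_neg, toRF_one]
  · simp [pen_zero_left, toRF_neg, toRF_one]
  · simp [toRF_one]

lemma Rl_add {a b : Type} {S T : Matrix a b (RatFunc ℂ)} (hS : Rl S) (hT : Rl T) :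
    Rl (S + T) := by
  obtain ⟨ι, _, _, E, F, Q, V, x, hd, h1, h2⟩ := hS
  obtain ⟨κ, _, _, E', F', Q', V', x', hd', h1', h2'⟩ := hT
  refine ⟨ι ⊕ κ, inferInstance, inferInstance, fromBlocks E 0 0 E', fromBlocks F 0 0 F',
    fromCols Q Q', fromRows V V', fromRows x x', ?_, ?_, ?_⟩
  · rw [pen_fromBlocks, pen_zero, pen_zero, Matrix.det_fromBlocks_zero₂₁]
    exact mul_ne_zero hd hd'
  · rw [pen_fromBlocks, pen_zero, pen_zero, fromBlocks_mul_fromRows, toRF_fromRows, h1, h1']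
    simp
  · rw [toRF_fromCols, fromCols_mul_fromRows, h2, h2']

lemma Rl_mul {a b c : Type} [Fintype b] {S : Matrix a b (RatFunc ℂ)}
    {T : Matrix b c (RatFunc ℂ)} (hS : Rl S) (hT : Rl T) : Rl (S * T) := by
  obtain ⟨ι, _, _, E, F, Q, V, x, hd, h1, h2⟩ := hS
  obtain ⟨κ, _, _, E', F', Q', V', x', hd', h1', h2'⟩ := hT
  refine ⟨ι ⊕ κ, inferInstance, inferInstance, fromBlocks E 0 0 E', fromBlocks F (V * Q') 0 F',
    fromCols Q 0, fromRows 0 V', fromRows (x * T) x', ?_, ?_, ?_⟩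
  · rw [pen_fromBlocks, pen_zero, Matrix.det_fromBlocks_zero₂₁]
    exact mul_ne_zero hd hd'
  · rw [pen_fromBlocks, pen_zero, pen_zero_left, fromBlocks_mul_fromRows, toRF_fromRows, h1',
      toRF_mul, ← Matrix.mul_assoc, h1, Matrix.neg_mul, Matrix.mul_assoc (toRF V), h2', toRF_zero]
    simp
  · rw [toRF_fromCols, fromCols_mul_fromRows, ← Matrix.mul_assoc, h2, toRF_zero]
    simp

/-- A scalar as a `1 × 1` matrix. -/
def sc (f : RatFunc ℂ) : Matrix Unit Unit (RatFunc ℂ) := fun _ _ => f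

lemma sc_mul (f g : RatFunc ℂ) : sc (f * g) = sc f * sc g := by
  ext i j; simp [sc, Matrix.mul_apply]

lemma sc_add (f g : RatFunc ℂ) : sc (f + g) = sc f + sc g := by
  ext i j; simp [sc]

lemma Rl_sc_C (c : ℂ) : Rl (sc (algebraMap ℂ (RatFunc ℂ) c)) :=
  Rl_const (fun _ _ => c : Matrix Unit Unit ℂ)

lemma Rl_sc_zz : Rl (sc zz) := by
  refine ⟨Unit ⊕ Unit, inferInstance, inferInstance, fromBlocks 0 (-1) 0 0,
    fromBlocks (-1) 0 0 (-1), fromCols 1 0, fromRows 0 1, fromRows (sc zz) 1, ?_, ?_, ?_⟩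
  · rw [pen_fromBlocks, pen_zero, Matrix.det_fromBlocks_zero₂₁]
    simp [pen_zero_left, toRF_neg, toRF_one]
  · rw [pen_fromBlocks, pen_zero, pen_zero_left, pen_zero_right, fromBlocks_mul_fromRows,
      toRF_fromRows, toRF_zero, toRF_neg, toRF_one]
    ext (i | i) j <;> simp [sc]
  · rw [toRF_fromCols, fromCols_mul_fromRows, toRF_zero, toRF_one]
    simp

lemma Rl_sc_inv {f : RatFunc ℂ} (hf : f ≠ 0) (h : Rl (sc f)) : Rl (sc f⁻¹) := by
  obtain ⟨ι, _, _, E, F, Q, V, x, hd, h1, h2⟩ := h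
  refine ⟨ι ⊕ Unit, inferInstance, inferInstance, fromBlocks E 0 0 0,
    fromBlocks F (-V) (-Q) 0, fromCols 0 (-1), fromRows 0 1,
    fromRows (x * sc f⁻¹) (-sc f⁻¹), ?_, ?_, ?_⟩
  · have hu : IsUnit (pen E F).det := isUnit_iff_ne_zero.2 hd
    have := Matrix.invertibleOfIsUnitDet _ hu
    rw [pen_fromBlocks, Matrix.det_fromBlocks₁₁]
    have hx : ⅟(pen E F) * toRF V = x := by
      rw [← h1, ← Matrix.mul_assoc, invOf_mul_self, Matrix.one_mul]
    refine mul_ne_zero hd ?_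
    rw [pen_zero, pen_zero_left, pen_zero_left, toRF_neg, toRF_neg, neg_neg, neg_neg,
      Matrix.mul_assoc, hx, h2]
    simpa [sc] using hf
  · rw [pen_fromBlocks, pen_zero, pen_zero_left, pen_zero_left, toRF_neg, toRF_neg, neg_neg,
      neg_neg, fromBlocks_mul_fromRows, toRF_fromRows, toRF_zero, toRF_one,
      ← Matrix.mul_assoc, ← Matrix.mul_assoc, h1, h2, ← sc_mul, mul_inv_cancel₀ hf]
    ext (i | i) j <;> simp [sc]
  · rw [toRF_fromCols, fromCols_mul_fromRows, toRF_zero, toRF_neg, toRF_one]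
    simp

lemma Rl_sc_poly (p : ℂ[X]) : Rl (sc (algebraMap ℂ[X] (RatFunc ℂ) p)) := by
  induction p using Polynomial.induction_on with
  | C c => rw [RatFunc.algebraMap_C, ← RatFunc.algebraMap_eq_C]; exact Rl_sc_C c
  | add p q hp hq => rw [map_add, sc_add]; exact Rl_add hp hq
  | monomial n c h =>
    rw [pow_succ, ← mul_assoc, map_mul, RatFunc.algebraMap_X, sc_mul]
    exact Rl_mul h Rl_sc_zz

lemma Rl_sc (f : RatFunc ℂ) : Rl (sc f) := by
  induction f using RatFunc.induction_on with
  | f p q hq =>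
    rw [div_eq_mul_inv, sc_mul]
    exact Rl_mul (Rl_sc_poly p) (Rl_sc_inv (RatFunc.algebraMap_ne_zero hq) (Rl_sc_poly q))

lemma Rl_single {m : ℕ} (i j : Fin m) (f : RatFunc ℂ) : Rl (Matrix.single i j f) := by
  have h := Rl_mul (Rl_mul (Rl_const (Matrix.single i () (1 : ℂ))) (Rl_sc f))
    (Rl_const (Matrix.single () j (1 : ℂ)))
  have e : toRF (Matrix.single i () (1 : ℂ)) * sc f * toRF (Matrix.single () j (1 : ℂ)) =
      Matrix.single i j f := by
    have e1 : toRF (Matrix.single i () (1 : ℂ)) = Matrix.single i () (1 : RatFunc ℂ) := by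
      simp [toRF, Matrix.map_single]
    have e2 : toRF (Matrix.single () j (1 : ℂ)) = Matrix.single () j (1 : RatFunc ℂ) := by
      simp [toRF, Matrix.map_single]
    rw [e1, e2, Matrix.single_mul_mul_single]
    simp [sc]
  rwa [e] at h

lemma Rl_sum {m : ℕ} {κ : Type} (s : Finset κ) (g : κ → Matrix (Fin m) (Fin m) (RatFunc ℂ))
    (h : ∀ k, Rl (g k)) : Rl (∑ k ∈ s, g k) := by
  classical
  induction s using Finset.induction_on with
  | empty =>
    rw [Finset.sum_empty, ← toRF_zero]
    exact Rl_const _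
  | insert k s hk ih => rw [Finset.sum_insert hk]; exact Rl_add (h k) ih

lemma Rl_all {m : ℕ} (T : Matrix (Fin m) (Fin m) (RatFunc ℂ)) : Rl T := by
  rw [Matrix.matrix_eq_sum_single T]
  exact Rl_sum _ _ fun i => Rl_sum _ _ fun j => Rl_single i j _

/-- The realization with an arbitrary finite index type. -/
lemma exists_real {m : ℕ} (S : Matrix (Fin m) (Fin m) (RatFunc ℂ)) (hS : pc S = (-zz⁻¹) • S) :
    ∃ (ι : Type) (_ : Fintype ι) (_ : DecidableEq ι) (A : Matrix ι ι ℂ)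
      (B C : Matrix ι (Fin m) ℂ), (pen A Aᴴ).det ≠ 0 ∧
      S = pen Bᴴ Cᴴ * (pen A Aᴴ)⁻¹ * pen C B := by
  set T := (2⁻¹ : RatFunc ℂ) • S with hT
  have hST : S = T - zz • pc T := by
    have hz := zz_ne
    rw [hT, pc_smul, hS]
    have h2 : sg 2 = 2 := map_ofNat sg 2
    ext i j
    simp [h2]
    field_simp
    ring
  obtain ⟨ι, _, _, E, F, Q, V, x, hd, h1, h2⟩ := Rl_all T
  have hd' := pen_det_symm hd
  have hXu : IsUnit (pen E F).det := isUnit_iff_ne_zero.2 hd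
  have hYu : IsUnit (pen Fᴴ Eᴴ).det := isUnit_iff_ne_zero.2 hd'
  have hinv : pen (fromBlocks 0 E Fᴴ 0) (fromBlocks 0 E Fᴴ 0)ᴴ *
      fromBlocks 0 (pen Fᴴ Eᴴ)⁻¹ (pen E F)⁻¹ 0 = 1 := by
    rw [fromBlocks_conjTranspose, pen_fromBlocks]
    simp [pen_zero, fromBlocks_multiply, Matrix.mul_nonsing_inv _ hXu,
      Matrix.mul_nonsing_inv _ hYu]
  refine ⟨ι ⊕ ι, inferInstance, inferInstance, fromBlocks 0 E Fᴴ 0, fromRows (-V) 0,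
    fromRows 0 (-Qᴴ), ?_, ?_⟩
  · intro h0
    have := congrArg Matrix.det hinv
    rw [Matrix.det_mul, h0, zero_mul, Matrix.det_one] at this
    exact zero_ne_one this
  · rw [Matrix.inv_eq_right_inv hinv]
    have hx : (pen E F)⁻¹ * toRF V = x := by
      rw [← h1, ← Matrix.mul_assoc, Matrix.nonsing_inv_mul _ hXu, Matrix.one_mul]
    have hr : pen (fromRows (-V) 0)ᴴ (fromRows 0 (-Qᴴ))ᴴ =
        fromCols (-(zz • toRF Vᴴ)) (toRF Q) := by
      ext i (j | j) <;> simp [pen, toRF]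
    have hc : pen (fromRows (0 : Matrix ι (Fin m) ℂ) (-Qᴴ)) (fromRows (-V) 0) =
        fromRows (toRF V) (-(zz • toRF Qᴴ)) := by
      ext (i | i) j <;> simp [pen, toRF]
    have hV : toRF Vᴴ = (-zz⁻¹) • (pc x * pen Fᴴ Eᴴ) := by
      rw [← pc_toRF, ← h1, pc_mul, pc_pen, Matrix.mul_smul]
    have hpT : pc T = pc x * toRF Qᴴ := by
      rw [← h2, pc_mul, pc_toRF]
    have key : toRF Vᴴ * ((pen Fᴴ Eᴴ)⁻¹ * toRF Qᴴ) = (-zz⁻¹) • pc T := by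
      rw [hV, Matrix.smul_mul, Matrix.mul_assoc, ← Matrix.mul_assoc (pen Fᴴ Eᴴ),
        Matrix.mul_nonsing_inv _ hYu, Matrix.one_mul, hpT]
    rw [hr, hc, Matrix.mul_assoc, fromBlocks_mul_fromRows, fromCols_mul_fromRows, hx]
    rw [Matrix.zero_mul, Matrix.zero_mul, zero_add, add_zero, h2, Matrix.mul_neg, Matrix.mul_smul,
      Matrix.neg_mul, Matrix.mul_neg, neg_neg, Matrix.smul_mul, Matrix.mul_smul, key, hST]
    have hz := zz_ne
    ext i j
    simp
    field_simp
    ring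

lemma fac_ne {α : ℂ} (hα : α ≠ 0) :
    (RatFunc.C α + RatFunc.C (starRingEnd ℂ α) * zz : RatFunc ℂ) ≠ 0 := by
  intro h
  have h1 : algebraMap ℂ[X] (RatFunc ℂ)
      (Polynomial.C α + Polynomial.C (starRingEnd ℂ α) * Polynomial.X) = 0 := by
    rw [map_add, map_mul, RatFunc.algebraMap_C, RatFunc.algebraMap_C, RatFunc.algebraMap_X]
    exact h
  have h2 := (map_eq_zero_iff _ (RatFunc.algebraMap_injective ℂ)).1 h1
  have h3 := congrArg (fun p => Polynomial.coeff p 0) h2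
  simp at h3
  exact hα h3

lemma sg_fac (α : ℂ) :
    sg (RatFunc.C α + RatFunc.C (starRingEnd ℂ α) * zz) =
      zz⁻¹ * (RatFunc.C α + RatFunc.C (starRingEnd ℂ α) * zz) := by
  have hz := zz_ne
  rw [← RatFunc.algebraMap_eq_C, map_add, map_mul, sg_C, sg_C, sg_zz]
  simp
  field_simp
  ring

lemma skew_iff {m : ℕ} {α : ℂ} (hα : α ≠ 0) (R : Matrix (Fin m) (Fin m) (RatFunc ℂ)) :
    IsParaSkewHermitian R ↔
      pc ((RatFunc.C α + RatFunc.C (starRingEnd ℂ α) * zz) • R) =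
        (-zz⁻¹) • ((RatFunc.C α + RatFunc.C (starRingEnd ℂ α) * zz) • R) := by
  have hc := fac_ne hα
  have hz := inv_ne_zero zz_ne
  rw [IsParaSkewHermitian, paraConj_eq, pc_smul, sg_fac]
  set c := RatFunc.C α + RatFunc.C (starRingEnd ℂ α) * zz
  have e : (-zz⁻¹) • (c • R) = (zz⁻¹ * c) • (-R) := by
    rw [smul_smul, smul_neg, neg_mul, neg_smul]
  rw [e]
  exact ⟨fun h => by rw [h], fun h => smul_right_injective _ (mul_ne_zero hz hc) h⟩

/-- parametrization of para-skew-Hermitian rational matrices. -/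
theorem paraSkewHermitian_parametrization (m : ℕ) (α : ℂ) (hα : α ≠ 0)
    (R : Matrix (Fin m) (Fin m) (RatFunc ℂ)) :
    IsParaSkewHermitian R ↔
      ∃ (p : ℕ) (A : Matrix (Fin p) (Fin p) ℂ) (B C : Matrix (Fin p) (Fin m) ℂ)
        (D : Matrix (Fin m) (Fin m) ℂ),
        (zz • toRF A - toRF Aᴴ).det ≠ 0 ∧
        (RatFunc.C α + RatFunc.C (starRingEnd ℂ α) * zz) • R =
          (zz • toRF D - toRF Dᴴ) +
            (zz • toRF Bᴴ - toRF Cᴴ) * (zz • toRF A - toRF Aᴴ)⁻¹ * (zz • toRF C - toRF B) := by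
  rw [skew_iff hα]
  constructor
  · intro h
    obtain ⟨ι, _, _, A, B, C, hd, hS⟩ := exists_real _ h
    let e := (Fintype.equivFin ι).symm
    refine ⟨Fintype.card ι, A.submatrix e e, B.submatrix e id, C.submatrix e id, 0, ?_, ?_⟩
    · change ((pen A Aᴴ).submatrix e e).det ≠ 0
      rwa [Matrix.det_submatrix_equiv_self]
    · have h0 : zz • toRF (0 : Matrix (Fin m) (Fin m) ℂ) -
          toRF (0 : Matrix (Fin m) (Fin m) ℂ)ᴴ = 0 := by
        simp [toRF_zero]
      rw [h0, zero_add]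
      change _ = (pen Bᴴ Cᴴ).submatrix id e * ((pen A Aᴴ).submatrix e e)⁻¹ *
        (pen C B).submatrix e id
      rw [Matrix.inv_submatrix_equiv, Matrix.submatrix_mul_equiv, Matrix.submatrix_mul_equiv,
        Matrix.submatrix_id_id]
      exact hS
  · rintro ⟨p, A, B, C, D, hd, hS⟩
    rw [hS]
    change (pen A Aᴴ).det ≠ 0 at hd
    change pc (pen D Dᴴ + pen Bᴴ Cᴴ * (pen A Aᴴ)⁻¹ * pen C B) =
      (-zz⁻¹) • (pen D Dᴴ + pen Bᴴ Cᴴ * (pen A Aᴴ)⁻¹ * pen C B)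
    have hu : IsUnit (pen A Aᴴ).det := isUnit_iff_ne_zero.2 hd
    have hz := zz_ne
    have hi : pc (pen A Aᴴ)⁻¹ = (-zz) • (pen A Aᴴ)⁻¹ := by
      have h1 := congrArg pc (Matrix.mul_nonsing_inv _ hu)
      rw [pc_mul, pc_pen, pc_one, Matrix.conjTranspose_conjTranspose, Matrix.mul_smul,
        ← Matrix.smul_mul] at h1
      have h2 := Matrix.inv_eq_left_inv h1
      have h3 : (-zz) • (pen A Aᴴ)⁻¹ = (-zz) • ((-zz⁻¹) • pc (pen A Aᴴ)⁻¹) :=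
        congrArg (fun M => (-zz) • M) h2
      rw [h3, smul_smul]
      simp [hz]
    rw [pc_add, pc_mul, pc_mul, hi, pc_pen, pc_pen, pc_pen]
    simp only [Matrix.conjTranspose_conjTranspose, Matrix.smul_mul, Matrix.mul_smul, smul_smul,
      smul_add, Matrix.mul_assoc]
    congr 2
    field_simp
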